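/- Let A be an Artin algebra and m a nonnegative integer. Then for each 0 ≤ i ≤ m, ed Ω^{m−i}(A-mod) ≤ ed Ω^m(A-mod) + i. In particular, ed(A-mod) ≤ ed Ω^m(A-mod) + m. -/

import Mathlib

/-!
It suffices to show `ed Ωᵏ(A-mod) ≤ ed Ωᵏ⁺¹(A-mod) + 1`. Suppose `Ωᵏ⁺¹(A-mod) ⊆ [T]ₙ₊₁` with `T`
finitely generated, and embed `T` into a finitely generated injective module `I`.
By the horseshoe lemma, every `K` in `[T]ₙ₊₁` fits into a sequence `0 → K → J → L → 0` with `J`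
injective in `add T'` and `L` in `[T']ₙ₊₁`, where `T' = I × (I / T) × A` (`bracket_subset_coSyz`);
the passage to direct summands is a Schanuel-type argument (`cokernel_summand`).
For `X` in `Ωᵏ(A-mod)` take `0 → K → P → X → 0` with `P` free of finite rank. Then `K` is in
`Ωᵏ⁺¹(A-mod)`, and pushing out along `K → J` gives `0 → P → X × J → L → 0` (`ses_prod`).
Hence `X`, a summand of `X × J`, lies in `[T']ₙ₊₂`.

The Artin algebra hypothesis provides `I` (`exists_finite_injective`): the injective hull `E` of a
finitely generated module `M` is finitely generated. Indeed a map from a simple module `S` to `E`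
has image in `M`, by essentiality, so `Hom(S, E)` embeds `R`-linearly into `M`. By induction on
length, `Hom(N, E)` is Noetherian over `R` for each `N` of finite length, in particular for
`N = A`, where it is `E`.
-/

open CategoryTheory

universe u

namespace Paper

variable (A : Type u) [Ring A]

/-- A short exact sequence `0 → X → Y → Z → 0` of `A`-modules. -/
def SES (X Y Z : ModuleCat.{u} A) : Prop :=
  ∃ (f : X →ₗ[A] Y) (g : Y →ₗ[A] Z),
    Function.Injective f ∧ Function.Surjective g ∧ LinearMap.range f = LinearMap.ker g

/-- `M` is a direct summand of `X`. -/
def IsSummand (M X : ModuleCat.{u} A) : Prop :=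
  ∃ (i : M →ₗ[A] X) (r : X →ₗ[A] M), r.comp i = LinearMap.id

/-- The additive closure `add 𝒯`: direct summands of finite direct sums of objects of `𝒯`. -/
def addClosure (T : Set (ModuleCat.{u} A)) : Set (ModuleCat.{u} A) :=
  { M | ∃ (n : ℕ) (f : Fin n → ModuleCat.{u} A), (∀ j, f j ∈ T) ∧
      IsSummand A M (ModuleCat.of A (∀ j, (f j : Type u))) }

/-- The extension product `𝒞 • 𝒟`: (summands of) extensions of a module of `𝒟`
by a module of `𝒞`. -/
def bullet (C D : Set (ModuleCat.{u} A)) : Set (ModuleCat.{u} A) :=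
  addClosure A { X | ∃ C' ∈ C, ∃ D' ∈ D, SES A C' X D' }

/-- `[𝒯]ₙ`, defined by `[𝒯]₀ = {0}`, `[𝒯]₁ = add 𝒯` and `[𝒯]ₙ = [𝒯]₁ • [𝒯]ₙ₋₁`. -/
def bracket (T : Set (ModuleCat.{u} A)) : ℕ → Set (ModuleCat.{u} A)
  | 0 => { M | ∀ x : M, x = 0 }
  | 1 => addClosure A T
  | n + 2 => bullet A (addClosure A T) (bracket T (n + 1))

/-- The class `𝒯₁ ⊕ 𝒯₂ = {X ⊕ Y | X ∈ 𝒯₁, Y ∈ 𝒯₂}`. -/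
def setSum (T1 T2 : Set (ModuleCat.{u} A)) : Set (ModuleCat.{u} A) :=
  { M | ∃ X ∈ T1, ∃ Y ∈ T2, Nonempty ((M : Type u) ≃ₗ[A] (↥X × ↥Y)) }

/-- The extension dimension of a subcategory `𝒞` of `A`-mod:
the least `n` such that `𝒞 ⊆ [T]_{n+1}` for some finitely generated module `T`. -/
noncomputable def ed (C : Set (ModuleCat.{u} A)) : ℕ∞ :=
  sInf { n : ℕ∞ | ∃ m : ℕ, n = (m : ℕ∞) ∧
    ∃ T : ModuleCat.{u} A, Module.Finite A T ∧ C ⊆ bracket A {T} (m + 1) }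

/-- The category `Ωⁿ(A-mod)` of `n`-th syzygy modules: finitely generated `K` admitting
an exact sequence `0 → K → P⁰ → ⋯ → P^{n-1} → M → 0` with all `Pⁱ` projective,
encoded by a chain of short exact sequences. -/
def SyzCat (n : ℕ) : Set (ModuleCat.{u} A) :=
  { K | Module.Finite A K ∧
    ∃ (Ks : Fin (n + 1) → ModuleCat.{u} A) (P : Fin n → ModuleCat.{u} A),
      Ks 0 = K ∧ (∀ i, Module.Finite A (Ks i)) ∧
      (∀ i, Module.Finite A (P i) ∧ Module.Projective A (P i)) ∧
      ∀ i : Fin n, SES A (Ks i.castSucc) (P i) (Ks i.succ) }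

/-- The category `Ω^∞(A-mod)` of infinite syzygy modules: finitely generated `K` admitting
an exact sequence `0 → K → P⁰ → P¹ → ⋯` with all `Pⁱ` projective. -/
def InfSyzCat : Set (ModuleCat.{u} A) :=
  { K | Module.Finite A K ∧
    ∃ Ks P : ℕ → ModuleCat.{u} A,
      Ks 0 = K ∧ (∀ i, Module.Finite A (Ks i)) ∧
      (∀ i, Module.Finite A (P i) ∧ Module.Projective A (P i)) ∧
      ∀ i : ℕ, SES A (Ks i) (P i) (Ks (i + 1)) }

/-- A submodule is superfluous (small). -/
def Superfluous {M : ModuleCat.{u} A} (N : Submodule A M) : Prop :=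
  ∀ N' : Submodule A M, N ⊔ N' = ⊤ → N' = ⊤

/-- `K` is the (minimal) syzygy `Ω(M)`: the kernel of a projective cover `P → M`. -/
def IsSyzygyOf (K M : ModuleCat.{u} A) : Prop :=
  ∃ (P : ModuleCat.{u} A) (i : K →ₗ[A] P) (p : P →ₗ[A] M),
    Module.Projective A P ∧ Function.Injective i ∧ Function.Surjective p ∧
    LinearMap.range i = LinearMap.ker p ∧ Superfluous A (LinearMap.ker p)

/-- `K ≅ Ωⁿ(M)`. -/
def IsIterSyzygyOf : ℕ → ModuleCat.{u} A → ModuleCat.{u} A → Prop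
  | 0, K, M => Nonempty ((K : Type u) ≃ₗ[A] M)
  | n + 1, K, M => ∃ L, IsIterSyzygyOf n L M ∧ IsSyzygyOf A K L

/-- A submodule is essential. -/
def EssentialIn {M : ModuleCat.{u} A} (N : Submodule A M) : Prop :=
  ∀ N' : Submodule A M, N ⊓ N' = ⊥ → N' = ⊥

/-- `C` is the cosyzygy `Ω⁻¹(M)`: the cokernel of an injective envelope `M → I`. -/
def IsCosyzygyOf (C M : ModuleCat.{u} A) : Prop :=
  ∃ (I : ModuleCat.{u} A) (j : M →ₗ[A] I) (q : I →ₗ[A] C),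
    Module.Injective A I ∧ Function.Injective j ∧ Function.Surjective q ∧
    LinearMap.range j = LinearMap.ker q ∧ EssentialIn A (LinearMap.range j)

/-- `C ≅ Ω⁻ⁿ(M)`. -/
def IsIterCosyzygyOf : ℕ → ModuleCat.{u} A → ModuleCat.{u} A → Prop
  | 0, C, M => Nonempty ((C : Type u) ≃ₗ[A] M)
  | n + 1, C, M => ∃ L, IsIterCosyzygyOf n L M ∧ IsCosyzygyOf A C L

/-! ### Finitely generated injective modules -/

section InjectiveHulls

variable {A}

/-- Over an `R`-algebra, let `E` be an essential extension of a submodule `M` that is Noetherian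
over `R`. Then `Hom(N, E)` is Noetherian over `R` for every `N` of finite length: a map from a
simple module to `E` has image in `M`, so it is determined by an element of `M`. -/
lemma isNoetherian_hom_of_essential {R : Type u} [CommRing R] [Algebra R A]
    {E : Type u} [AddCommGroup E] [Module A E] [Module R E] [IsScalarTower R A E]
    [SMulCommClass A R E]
    (M : Submodule A E) (hM : IsNoetherian R (M.restrictScalars R))
    (hess : ∀ N : Submodule A E, M ⊓ N = ⊥ → N = ⊥)
    {N : Type u} [AddCommGroup N] [Module A N] (hN : IsFiniteLength A N) :
    IsNoetherian R (N →ₗ[A] E) := by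
  induction hN with
  | of_subsingleton => infer_instance
  | @of_simple_quotient N _ _ S _ _ ih =>
    have hS : IsNoetherian R ((N ⧸ S) →ₗ[A] E) := by
      have himg : ∀ (φ : (N ⧸ S) →ₗ[A] E) x, φ x ∈ M := by
        intro φ x
        by_cases h0 : φ = 0
        · simp [h0]
        have h1 : M.comap φ ≠ ⊥ := by
          intro hb
          apply h0
          rw [← LinearMap.range_eq_bot]
          apply hess
          rw [eq_bot_iff]
          rintro _ ⟨hy, y, rfl⟩
          have : y ∈ M.comap φ := hy
          rw [hb, Submodule.mem_bot] at this
          simp [this]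
        have h2 := (IsSimpleOrder.eq_bot_or_eq_top (M.comap φ)).resolve_left h1
        have : x ∈ M.comap φ := h2 ▸ Submodule.mem_top
        exact this
      obtain ⟨s, hs⟩ := @exists_ne (N ⧸ S) (IsSimpleModule.nontrivial A _) 0
      let ev : ((N ⧸ S) →ₗ[A] E) →ₗ[R] M.restrictScalars R :=
        { toFun := fun φ => ⟨φ s, himg φ s⟩
          map_add' := fun _ _ => rfl
          map_smul' := fun _ _ => rfl }
      refine isNoetherian_of_injective ev ?_
      rw [injective_iff_map_eq_zero]
      intro φ hφ
      have h0 : φ s = 0 := congrArg Subtype.val hφ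
      have h1 : LinearMap.ker φ ≠ ⊥ := by
        intro hb
        have : s ∈ LinearMap.ker φ := h0
        rw [hb, Submodule.mem_bot] at this
        exact hs this
      exact LinearMap.ker_eq_top.1
        ((IsSimpleOrder.eq_bot_or_eq_top (LinearMap.ker φ)).resolve_left h1)
    let f : ((N ⧸ S) →ₗ[A] E) →ₗ[R] (N →ₗ[A] E) :=
      { toFun := fun φ => φ.comp S.mkQ
        map_add' := fun _ _ => rfl
        map_smul' := fun _ _ => rfl }
    let g : (N →ₗ[A] E) →ₗ[R] (S →ₗ[A] E) :=
      { toFun := fun φ => φ.comp S.subtype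
        map_add' := fun _ _ => rfl
        map_smul' := fun _ _ => rfl }
    refine isNoetherian_of_range_eq_ker f g (le_antisymm ?_ ?_)
    · rintro _ ⟨φ, rfl⟩
      rw [LinearMap.mem_ker]
      ext x
      have : (Submodule.Quotient.mk (x : N) : N ⧸ S) = 0 :=
        (Submodule.Quotient.mk_eq_zero S).2 x.2
      simp [f, g, this]
    · intro φ hφ
      refine ⟨S.liftQ φ fun x hx => ?_, ?_⟩
      · exact LinearMap.congr_fun (f := g φ) hφ ⟨x, hx⟩
      · ext x; rfl

/-- Over an Artin algebra, an essential extension `E` of a finitely generated module is finitely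
generated, since `E ≅ Hom(A, E)`. -/
lemma finite_of_essential (R : Type u) [CommRing R] [IsArtinianRing R] [Algebra R A]
    [Module.Finite R A] {E : Type u} [AddCommGroup E] [Module A E]
    (M : Submodule A E) (hM : M.FG) (hess : ∀ N : Submodule A E, M ⊓ N = ⊥ → N = ⊥) :
    Module.Finite A E := by
  let : Module R E := Module.compHom E (algebraMap R A)
  have : IsScalarTower R A E := IsScalarTower.of_algebraMap_smul fun _ _ => rfl
  have : SMulCommClass A R E := ⟨fun a r x => by
    change a • (algebraMap R A r • x) = algebraMap R A r • (a • x)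
    rw [← mul_smul, ← mul_smul, Algebra.commutes]⟩
  have : IsArtinianRing A := IsArtinianRing.of_finite R A
  have : IsNoetherian R A := inferInstance
  have : IsNoetherianRing A := isNoetherian_of_tower R inferInstance
  have : Module.Finite A M := Module.Finite.iff_fg.2 hM
  have : Module.Finite R M := Module.Finite.trans A M
  have hMR : IsNoetherian R (M.restrictScalars R) :=
    (inferInstance : IsNoetherian R M)
  have h := isNoetherian_hom_of_essential (R := R) M hMR hess
    (N := A) (isFiniteLength_iff_isNoetherian_isArtinian.2 ⟨inferInstance, inferInstance⟩)
  let ev : (A →ₗ[A] E) →ₗ[R] E :=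
    { toFun := fun φ => φ 1
      map_add' := fun _ _ => rfl
      map_smul' := fun _ _ => rfl }
  have hev : Function.Surjective ev := fun x => ⟨LinearMap.toSpanSingleton A E x, by simp [ev]⟩
  have : Module.Finite R E := Module.Finite.of_surjective ev hev
  exact Module.Finite.of_restrictScalars_finite R A E

/-- Zorn's lemma gives complements in the weak sense: a submodule disjoint from `M` is contained
in a maximal one. -/
lemma exists_maximal_disjoint {E : Type u} [AddCommGroup E] [Module A E]
    (M N : Submodule A E) (h : Disjoint M N) :
    ∃ D, N ≤ D ∧ Disjoint M D ∧ ∀ D', D ≤ D' → Disjoint M D' → D' = D := by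
  obtain ⟨D, hND, hD⟩ := zorn_le_nonempty₀ {D : Submodule A E | Disjoint M D}
    (fun c hc hchain y hy => ⟨sSup c,
      hchain.directedOn.disjoint_sSup_right.2 fun z hz => hc hz, fun z hz => le_sSup hz⟩) N h
  exact ⟨D, hND, hD.1, fun D' h1 h2 => le_antisymm (hD.2 h2 h1) h1⟩

/-- If `D` is maximal with `M ⊓ D = 0`, then `M → E ⧸ D` is essential. -/
lemma essential_quotient {E : Type u} [AddCommGroup E] [Module A E]
    (M D : Submodule A E) (hd : Disjoint M D)
    (hmax : ∀ D', D ≤ D' → Disjoint M D' → D' = D)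
    (N : Submodule A (E ⧸ D)) (hN : M.map D.mkQ ⊓ N = ⊥) : N = ⊥ := by
  have h1 : N.comap D.mkQ = D := by
    refine hmax _ (Submodule.le_comap_mkQ D N) ?_
    rw [Submodule.disjoint_def]
    intro x hx hxN
    have : D.mkQ x ∈ M.map D.mkQ ⊓ N := ⟨⟨x, hx, rfl⟩, hxN⟩
    rw [hN, Submodule.mem_bot] at this
    exact Submodule.disjoint_def.1 hd x hx ((Submodule.Quotient.mk_eq_zero D).1 this)
  rw [eq_bot_iff]
  intro y hy
  obtain ⟨x, rfl⟩ := D.mkQ_surjective y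
  have : x ∈ N.comap D.mkQ := hy
  rw [h1] at this
  exact (Submodule.Quotient.mk_eq_zero D).2 this

lemma injective_of_retract {X Y : Type u} [AddCommGroup X] [Module A X] [AddCommGroup Y]
    [Module A Y] (i : X →ₗ[A] Y) (r : Y →ₗ[A] X) (h : r.comp i = LinearMap.id)
    [hY : Module.Injective A Y] : Module.Injective A X where
  out P Q _ _ _ _ f hf g := by
    obtain ⟨k, hk⟩ := hY.out f hf (i.comp g)
    exact ⟨r.comp k, fun x => by simpa [hk] using LinearMap.congr_fun h (g x)⟩

/-- Over an Artin algebra every finitely generated module embeds into a finitely generated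
injective module. -/
lemma exists_finite_injective (R : Type u) [CommRing R] [IsArtinianRing R] [Algebra R A]
    [Module.Finite R A] (T : ModuleCat.{u} A) [Module.Finite A T] :
    ∃ (I : ModuleCat.{u} A) (j : T →ₗ[A] I), Function.Injective j ∧ Module.Finite A I ∧
      Module.Injective A I := by
  let J : ModuleCat.{u} A := CategoryTheory.Injective.under T
  let ι : T →ₗ[A] J := (CategoryTheory.Injective.ι T).hom
  have hι : Function.Injective ι := (ModuleCat.mono_iff_injective _).1 inferInstance
  have hJ : Module.Injective A J :=
    @Module.injective_module_of_injective_object A J _ _ _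
      (inferInstanceAs (CategoryTheory.Injective (CategoryTheory.Injective.under T)))
  let M : Submodule A J := LinearMap.range ι
  have hM : M.FG := Module.Finite.iff_fg.1 (Module.Finite.range ι)
  -- `D` is a complement of `M`, and `E ⊇ M` a complement of `D`; `E` is the injective hull of `M`.
  obtain ⟨D, -, hMD, hDmax⟩ := exists_maximal_disjoint M ⊥ disjoint_bot_right
  obtain ⟨E, hME, hDE, hEmax⟩ := exists_maximal_disjoint D M hMD.symm
  have hessM := essential_quotient M D hMD hDmax
  have hfin : Module.Finite A (J ⧸ D) := finite_of_essential R (M.map D.mkQ) (hM.map _) hessM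
  let e : E →ₗ[A] (J ⧸ D) := D.mkQ.comp E.subtype
  have he : Function.Injective e := by
    rw [injective_iff_map_eq_zero]
    intro x hx
    have : (x : J) ∈ D := (Submodule.Quotient.mk_eq_zero D).1 hx
    exact Subtype.ext (Submodule.disjoint_def.1 hDE x this x.2)
  obtain ⟨h, hh⟩ := hJ.out e he E.subtype
  -- `h` extends the inclusion of `E` along the essential map `E → J ⧸ D`, so its range is an
  -- essential extension of `E`, hence disjoint from `D`, hence equal to `E`.
  have hhD : LinearMap.ker h = ⊥ ∧ Submodule.comap h D = ⊥ := by
    constructor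
    all_goals
      apply hessM
      rw [eq_bot_iff]
      rintro _ ⟨⟨x, hx, rfl⟩, hy⟩
      have h2 : h (D.mkQ x) = x := hh ⟨x, hME hx⟩
    · have h3 : h (D.mkQ x) = 0 := hy
      simp [h2.symm.trans h3]
    · have h3 : h (D.mkQ x) ∈ D := hy
      rw [h2] at h3
      exact (Submodule.Quotient.mk_eq_zero D).2 h3
  have hrange : LinearMap.range h = E := by
    refine hEmax _ ?_ ?_
    · intro x hx
      exact ⟨e ⟨x, hx⟩, hh ⟨x, hx⟩⟩
    · rw [Submodule.disjoint_def]
      rintro _ hx ⟨y, rfl⟩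
      have : y ∈ Submodule.comap h D := hx
      rw [hhD.2, Submodule.mem_bot] at this
      simp [this]
  let h' : (J ⧸ D) →ₗ[A] E := h.codRestrict E fun x => hrange ▸ LinearMap.mem_range_self h x
  have hr : (h'.comp D.mkQ).comp E.subtype = LinearMap.id := by
    ext x
    exact hh x
  refine ⟨ModuleCat.of A E, ι.codRestrict E fun x => hME (LinearMap.mem_range_self ι x), ?_, ?_,
    injective_of_retract E.subtype (h'.comp D.mkQ) hr⟩
  · intro x y hxy
    exact hι (congrArg Subtype.val hxy)
  · refine Module.Finite.of_surjective h' fun x => ?_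
    exact ⟨D.mkQ x, LinearMap.congr_fun hr x⟩

end InjectiveHulls

/-! ### Closure properties of `add` and of the brackets -/

section Closure

variable {A}

lemma IsSummand.refl (M : ModuleCat.{u} A) : IsSummand A M M :=
  ⟨LinearMap.id, LinearMap.id, rfl⟩

lemma IsSummand.trans {M X Y : ModuleCat.{u} A} (h : IsSummand A M X) (h' : IsSummand A X Y) :
    IsSummand A M Y := by
  obtain ⟨i, r, h⟩ := h
  obtain ⟨i', r', h'⟩ := h'
  refine ⟨i'.comp i, r.comp r', LinearMap.ext fun x => ?_⟩
  have h1 : r' (i' (i x)) = i x := LinearMap.congr_fun h' (i x)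
  have h2 : r (i x) = x := LinearMap.congr_fun h x
  simp [h1, h2]

lemma IsSummand.of_equiv {M X : ModuleCat.{u} A} (e : M ≃ₗ[A] X) : IsSummand A M X :=
  ⟨e, e.symm, by ext; simp⟩

lemma IsSummand.prod {M X M' X' : ModuleCat.{u} A} (h : IsSummand A M X)
    (h' : IsSummand A M' X') :
    IsSummand A (ModuleCat.of A (M × M')) (ModuleCat.of A (X × X')) := by
  obtain ⟨i, r, h⟩ := h
  obtain ⟨i', r', h'⟩ := h'
  refine ⟨i.prodMap i', r.prodMap r', LinearMap.ext fun x => Prod.ext ?_ ?_⟩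
  · exact LinearMap.congr_fun h x.1
  · exact LinearMap.congr_fun h' x.2

lemma isSummand_fst (X Y : ModuleCat.{u} A) : IsSummand A X (ModuleCat.of A (X × Y)) :=
  ⟨LinearMap.inl A X Y, LinearMap.fst A X Y, by ext; rfl⟩

lemma isSummand_snd (X Y : ModuleCat.{u} A) : IsSummand A Y (ModuleCat.of A (X × Y)) :=
  ⟨LinearMap.inr A X Y, LinearMap.snd A X Y, by ext; rfl⟩

lemma addClosure_summand {T : Set (ModuleCat.{u} A)} {M X : ModuleCat.{u} A}
    (h : IsSummand A M X) (hX : X ∈ addClosure A T) : M ∈ addClosure A T := by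
  obtain ⟨n, f, hf, hs⟩ := hX
  exact ⟨n, f, hf, h.trans hs⟩

lemma addClosure_pi {T : Set (ModuleCat.{u} A)} {ι : Type} [Fintype ι]
    (f : ι → ModuleCat.{u} A) (hf : ∀ j, f j ∈ T) :
    ModuleCat.of A (∀ j, (f j : Type u)) ∈ addClosure A T :=
  ⟨Fintype.card ι, fun k => f ((Fintype.equivFin ι).symm k), fun _ => hf _,
    IsSummand.of_equiv
      (LinearEquiv.piCongrLeft A (fun j => (f j : Type u)) (Fintype.equivFin ι).symm).symm⟩

lemma subset_addClosure (T : Set (ModuleCat.{u} A)) : T ⊆ addClosure A T := fun X hX =>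
  addClosure_summand (X := ModuleCat.of A (Unit → X))
    ⟨LinearMap.pi fun _ => LinearMap.id, LinearMap.proj (), by ext; rfl⟩
    (addClosure_pi (fun _ : Unit => X) fun _ => hX)

lemma addClosure_prod {T : Set (ModuleCat.{u} A)} {X Y : ModuleCat.{u} A}
    (hX : X ∈ addClosure A T) (hY : Y ∈ addClosure A T) :
    ModuleCat.of A (X × Y) ∈ addClosure A T := by
  obtain ⟨n, f, hf, hX⟩ := hX
  obtain ⟨m, g, hg, hY⟩ := hY
  have e : IsSummand A
      (ModuleCat.of A ((∀ j, (f j : Type u)) × (∀ j, (g j : Type u))))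
      (ModuleCat.of A (∀ j, ((Sum.elim f g j : ModuleCat.{u} A) : Type u))) :=
    ⟨LinearMap.pi (Sum.rec (fun j => (LinearMap.proj j).comp (LinearMap.fst A _ _))
        fun j => (LinearMap.proj j).comp (LinearMap.snd A _ _)),
      (LinearMap.pi fun j => LinearMap.proj (Sum.inl j)).prod
        (LinearMap.pi fun j => LinearMap.proj (Sum.inr j)), rfl⟩
  refine addClosure_summand ((hX.prod hY).trans e) (addClosure_pi _ ?_)
  rintro (j | j)
  · exact hf j
  · exact hg j

lemma addClosure_of_subsingleton (T : Set (ModuleCat.{u} A)) {X : ModuleCat.{u} A}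
    (hX : ∀ x : X, x = 0) : X ∈ addClosure A T :=
  ⟨0, Fin.elim0, fun j => j.elim0, 0, 0, LinearMap.ext fun x => by simp [hX x]⟩

/-- `addClosure T` is the least class containing `T` and the zero modules which is closed under
direct summands and binary direct sums. -/
lemma addClosure_subset {T Q : Set (ModuleCat.{u} A)} (hT : T ⊆ Q)
    (h0 : ∀ X : ModuleCat.{u} A, (∀ x : X, x = 0) → X ∈ Q)
    (hs : ∀ M X : ModuleCat.{u} A, IsSummand A M X → X ∈ Q → M ∈ Q)
    (hp : ∀ X Y : ModuleCat.{u} A, X ∈ Q → Y ∈ Q → ModuleCat.of A (X × Y) ∈ Q) :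
    addClosure A T ⊆ Q := by
  rintro M ⟨n, f, hf, hM⟩
  refine hs _ _ hM ?_
  clear hM M
  induction n with
  | zero => exact h0 _ fun x => funext fun j => j.elim0
  | succ n ih =>
    refine hs _ _ ?_ (hp _ _ (hT (hf 0)) (ih (fun j => f j.succ) fun j => hf _))
    refine ⟨(LinearMap.proj 0).prod (LinearMap.pi fun j => LinearMap.proj j.succ),
      LinearMap.pi (Fin.cases (LinearMap.fst A _ _)
        fun j => (LinearMap.proj j).comp (LinearMap.snd A _ _)), ?_⟩
    refine LinearMap.ext fun x => funext fun j => ?_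
    induction j using Fin.cases <;> rfl

lemma addClosure_subset_addClosure {T T' : Set (ModuleCat.{u} A)} (h : T ⊆ addClosure A T') :
    addClosure A T ⊆ addClosure A T' :=
  addClosure_subset h (fun _ => addClosure_of_subsingleton T') (fun _ _ => addClosure_summand)
    (fun _ _ => addClosure_prod)

/-- The class whose additive closure is the bracket `[T]ₙ₊₁`. -/
def bracketGen (T : Set (ModuleCat.{u} A)) : ℕ → Set (ModuleCat.{u} A)
  | 0 => T
  | n + 1 => { X | ∃ C' ∈ addClosure A T, ∃ D' ∈ bracket A T (n + 1), SES A C' X D' }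

lemma bracket_succ (T : Set (ModuleCat.{u} A)) (n : ℕ) :
    bracket A T (n + 1) = addClosure A (bracketGen T n) := by
  cases n <;> rfl

lemma bracket_ext {T : Set (ModuleCat.{u} A)} {n : ℕ} {X Y Z : ModuleCat.{u} A}
    (h : SES A X Y Z) (hX : X ∈ addClosure A T) (hZ : Z ∈ bracket A T (n + 1)) :
    Y ∈ bracket A T (n + 2) :=
  subset_addClosure _ ⟨X, hX, Z, hZ, h⟩

/-- The zero module lies in every bracket, so `[T]₁ ⊆ [T]ₙ₊₁` by induction. -/
lemma addClosure_subset_bracket (T : Set (ModuleCat.{u} A)) (n : ℕ) :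
    addClosure A T ⊆ bracket A T (n + 1) := by
  cases n with
  | zero => exact subset_rfl
  | succ n =>
    intro X hX
    refine bracket_ext (Z := ModuleCat.of A PUnit) ⟨LinearMap.id, 0, fun _ _ h => h,
      fun y => ⟨0, Subsingleton.elim _ _⟩, ?_⟩ hX ?_
    · simp
    · rw [bracket_succ]
      exact addClosure_of_subsingleton _ fun x => Subsingleton.elim _ _

end Closure

/-! ### Dimension shifting -/

section Shift

variable {A}

/-- A map killing the kernel of a surjection factors through it. -/
lemma exists_factor {J L M : Type u} [AddCommGroup J] [AddCommGroup L] [AddCommGroup M]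
    [Module A J] [Module A L] [Module A M] {q : J →ₗ[A] L} (hq : Function.Surjective q)
    {h : J →ₗ[A] M} (hk : LinearMap.ker q ≤ LinearMap.ker h) :
    ∃ h' : L →ₗ[A] M, ∀ x, h' (q x) = h x := by
  refine ⟨((LinearMap.ker q).liftQ h hk)
    ∘ₗ (q.quotKerEquivOfSurjective hq).symm.toLinearMap, fun x => ?_⟩
  have : (q.quotKerEquivOfSurjective hq).symm (q x) = (LinearMap.ker q).mkQ x := by
    rw [LinearEquiv.symm_apply_eq]; rfl
  simp [this]

/-- If `K` is a summand of `X`, and `K → J`, `X → J'` are embeddings into injectives with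
cokernels `L`, `L'`, then `L` is a summand of `L' × J`. -/
lemma cokernel_summand {K J L X J' L' : ModuleCat.{u} A} (hKX : IsSummand A K X)
    [hJ : Module.Injective A J] [hJ' : Module.Injective A J']
    (h : SES A K J L) (h' : SES A X J' L') :
    IsSummand A L (ModuleCat.of A (L' × J)) := by
  obtain ⟨s, r, hrs⟩ := hKX
  obtain ⟨i, q, hi, hq, hiq⟩ := h
  obtain ⟨i', q', hi', hq', hiq'⟩ := h'
  obtain ⟨a, ha⟩ := hJ'.out i hi (i'.comp s)
  obtain ⟨b, hb⟩ := hJ.out i' hi' (i.comp r)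
  have hqi : ∀ x, q (i x) = 0 := fun x => by
    rw [← LinearMap.mem_ker, ← hiq]; exact ⟨x, rfl⟩
  have hqi' : ∀ x, q' (i' x) = 0 := fun x => by
    rw [← LinearMap.mem_ker, ← hiq']; exact ⟨x, rfl⟩
  have hba : ∀ x, b (a (i x)) = i x := fun x => by
    have : r (s x) = x := LinearMap.congr_fun hrs x
    rw [ha, LinearMap.comp_apply, hb, LinearMap.comp_apply, this]
  obtain ⟨a', ha'⟩ := exists_factor hq (h := q'.comp a) (by
    rw [← hiq]; rintro _ ⟨x, rfl⟩; simp [ha, hqi'])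
  obtain ⟨b', hb'⟩ := exists_factor hq' (h := q.comp b) (by
    rw [← hiq']; rintro _ ⟨x, rfl⟩; simp [hb, hqi])
  -- `1 - b a` vanishes on `K`, so it factors through `L`.
  obtain ⟨c, hc⟩ := exists_factor hq (h := LinearMap.id - b.comp a) (by
    rw [← hiq]; rintro _ ⟨x, rfl⟩; simp [hba])
  refine ⟨a'.prod c, b'.coprod q, LinearMap.ext fun y => ?_⟩
  obtain ⟨x, rfl⟩ := hq y
  simp [ha', hb', hc]

/-- The horseshoe lemma for embeddings into injective modules. -/
lemma horseshoe {U X V Ju Lu Jv Lv : ModuleCat.{u} A} (h : SES A U X V)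
    [hJu : Module.Injective A Ju] (hu : SES A U Ju Lu) (hv : SES A V Jv Lv) :
    ∃ L : ModuleCat.{u} A, SES A X (ModuleCat.of A (Ju × Jv)) L ∧ SES A Lu L Lv := by
  obtain ⟨f, g, hf, hg, hfg⟩ := h
  obtain ⟨i, p, hi, hp, hip⟩ := hu
  obtain ⟨j, q, hj, hq, hjq⟩ := hv
  obtain ⟨α, hα⟩ := hJu.out f hf i
  have hgf : ∀ x, g (f x) = 0 := fun x => by
    rw [← LinearMap.mem_ker, ← hfg]; exact ⟨x, rfl⟩
  have hqj : ∀ x, q (j x) = 0 := fun x => by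
    rw [← LinearMap.mem_ker, ← hjq]; exact ⟨x, rfl⟩
  have hpi : ∀ x, p (i x) = 0 := fun x => by
    rw [← LinearMap.mem_ker, ← hip]; exact ⟨x, rfl⟩
  let φ : X →ₗ[A] (Ju × Jv) := α.prod (j.comp g)
  let N := LinearMap.range φ
  have hker : ∀ a : Ju, ((a, 0) : Ju × Jv) ∈ N ↔ p a = 0 := by
    intro a
    rw [← LinearMap.mem_ker (f := p), ← hip]
    constructor
    · rintro ⟨x, hx⟩
      have h1 : α x = a := congrArg Prod.fst hx
      have h2 : j (g x) = 0 := congrArg Prod.snd hx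
      have h3 : x ∈ LinearMap.ker g := hj (h2.trans (map_zero j).symm)
      rw [← hfg] at h3
      obtain ⟨w, rfl⟩ := h3
      exact ⟨w, by rw [← h1, hα]⟩
    · rintro ⟨w, rfl⟩
      exact ⟨f w, by simp [φ, hα, hgf]⟩
  obtain ⟨s, hs⟩ := exists_factor hp (h := N.mkQ.comp (LinearMap.inl A Ju Jv)) (by
    intro a ha
    exact (Submodule.Quotient.mk_eq_zero N).2 ((hker a).2 ha))
  obtain ⟨t, ht⟩ := exists_factor N.mkQ_surjective (h := q.comp (LinearMap.snd A Ju Jv)) (by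
    rw [Submodule.ker_mkQ]
    rintro _ ⟨x, rfl⟩
    exact hqj _)
  refine ⟨ModuleCat.of A ((Ju × Jv) ⧸ N), ⟨φ, N.mkQ, ?_, N.mkQ_surjective, ?_⟩, s, t, ?_, ?_, ?_⟩
  · rw [injective_iff_map_eq_zero]
    intro x hx
    have h1 : α x = 0 := congrArg Prod.fst hx
    have h2 : j (g x) = 0 := congrArg Prod.snd hx
    have h3 : x ∈ LinearMap.ker g := hj (h2.trans (map_zero j).symm)
    rw [← hfg] at h3
    obtain ⟨w, rfl⟩ := h3
    rw [hα] at h1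
    rw [hi (h1.trans (map_zero i).symm), map_zero]
  · exact (Submodule.ker_mkQ N).symm
  · rw [injective_iff_map_eq_zero]
    intro y hy
    obtain ⟨a, rfl⟩ := hp y
    rw [hs] at hy
    exact (hker a).1 ((Submodule.Quotient.mk_eq_zero N).1 hy)
  · intro z
    obtain ⟨b, rfl⟩ := hq z
    exact ⟨N.mkQ (0, b), ht _⟩
  · apply le_antisymm
    · rintro _ ⟨y, rfl⟩
      obtain ⟨a, rfl⟩ := hp y
      rw [LinearMap.mem_ker, hs, LinearMap.comp_apply, ht]
      simp
    · intro y hy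
      obtain ⟨⟨a, b⟩, rfl⟩ := N.mkQ_surjective y
      rw [LinearMap.mem_ker, ht] at hy
      have h1 : b ∈ LinearMap.ker q := hy
      rw [← hjq] at h1
      obtain ⟨v, rfl⟩ := h1
      obtain ⟨x, rfl⟩ := hg v
      refine ⟨p (a - α x), ?_⟩
      rw [hs]
      refine (Submodule.Quotient.eq N).2 ⟨-x, ?_⟩
      simp [φ]

instance injective_prod {X Y : Type u} [AddCommGroup X] [Module A X] [AddCommGroup Y]
    [Module A Y] [hX : Module.Injective A X] [hY : Module.Injective A Y] :
    Module.Injective A (X × Y) where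
  out P Q _ _ _ _ f hf g := by
    obtain ⟨k, hk⟩ := hX.out f hf ((LinearMap.fst A X Y).comp g)
    obtain ⟨l, hl⟩ := hY.out f hf ((LinearMap.snd A X Y).comp g)
    exact ⟨k.prod l, fun x => Prod.ext (hk x) (hl x)⟩

/-- The modules that embed into an injective module of `addClosure T`
with cokernel in `[T]ₙ₊₁`. -/
def CoSyz (T : Set (ModuleCat.{u} A)) (n : ℕ) : Set (ModuleCat.{u} A) :=
  { K | ∃ J L : ModuleCat.{u} A, SES A K J L ∧ Module.Injective A J ∧ J ∈ addClosure A T ∧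
    L ∈ bracket A T (n + 1) }

/-- `CoSyz T n` is closed under summands, finite direct sums and zero modules, so it contains the
additive closure of each of its subclasses. -/
lemma addClosure_subset_coSyz {T S : Set (ModuleCat.{u} A)} {n : ℕ} (hS : S ⊆ CoSyz T n) :
    addClosure A S ⊆ CoSyz T n := by
  refine addClosure_subset hS ?_ ?_ ?_
  · intro X hX
    refine ⟨X, X, ⟨LinearMap.id, LinearMap.id, fun _ _ h => h, fun x => ⟨x, rfl⟩, ?_⟩, ?_,
      addClosure_of_subsingleton _ hX, ?_⟩
    · ext x; simp [hX x]
    · exact ⟨fun _ _ _ _ _ _ _ _ g => ⟨0, fun x => (hX _).symm⟩⟩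
    · rw [bracket_succ]; exact addClosure_of_subsingleton _ hX
  · rintro K X hKX ⟨J, L', h, hJ, hJT, hL'⟩
    obtain ⟨s, r, hrs⟩ := hKX
    have hs : Function.Injective s := Function.LeftInverse.injective (LinearMap.congr_fun hrs)
    have h' := h
    obtain ⟨i, q, hi, hq, hiq⟩ := h'
    have hK : SES A K J (ModuleCat.of A (J ⧸ LinearMap.range (i.comp s))) :=
      ⟨i.comp s, Submodule.mkQ _, hi.comp hs, Submodule.mkQ_surjective _,
        (Submodule.ker_mkQ _).symm⟩
    refine ⟨J, _, hK, hJ, hJT, ?_⟩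
    have hsum := cokernel_summand ⟨s, r, hrs⟩ hK h
    have hJ' := addClosure_subset_bracket T n hJT
    rw [bracket_succ] at hL' hJ' ⊢
    exact addClosure_summand hsum (addClosure_prod hL' hJ')
  · rintro X Y ⟨J, L, ⟨i, q, hi, hq, hiq⟩, hJ, hJT, hL⟩
      ⟨J', L', ⟨i', q', hi', hq', hiq'⟩, hJ', hJT', hL'⟩
    refine ⟨ModuleCat.of A (J × J'), ModuleCat.of A (L × L'),
      ⟨i.prodMap i', q.prodMap q', hi.prodMap hi', hq.prodMap hq', ?_⟩, injective_prod,
      addClosure_prod hJT hJT', ?_⟩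
    · rw [LinearMap.range_prodMap, LinearMap.ker_prodMap, hiq, hiq']
    · rw [bracket_succ] at hL hL' ⊢
      exact addClosure_prod hL hL'

/-- If `T` embeds into the injective module `I`, and `I` and `C = I / T` lie in `add T'`, then the
whole of `[T]ₙ₊₁` has cosyzygies in `[T']ₙ₊₁`. -/
lemma bracket_subset_coSyz {T I C T' : ModuleCat.{u} A} (h : SES A T I C)
    [hI : Module.Injective A I] (hIT : I ∈ addClosure A {T'}) (hCT : C ∈ addClosure A {T'})
    (n : ℕ) : bracket A {T} (n + 1) ⊆ CoSyz {T'} n := by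
  have base : addClosure A {T} ⊆ CoSyz {T'} 0 := by
    apply addClosure_subset_coSyz
    rintro _ rfl
    exact ⟨I, C, h, hI, hIT, hCT⟩
  induction n with
  | zero => exact base
  | succ n ih =>
    rw [bracket_succ]
    apply addClosure_subset_coSyz
    rintro X ⟨U, hU, V, hV, hX⟩
    obtain ⟨Ju, Lu, hu, hJu, hJuT, hLu⟩ := base hU
    obtain ⟨Jv, Lv, hv, hJv, hJvT, hLv⟩ := ih hV
    obtain ⟨L, hXL, hL⟩ := horseshoe hX hu hv
    exact ⟨_, L, hXL, injective_prod, addClosure_prod hJuT hJvT, bracket_ext hL hLu hLv⟩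

/-- Given `0 → K → P → X → 0` and `0 → K → J → L → 0` with `J` injective, there is an exact
sequence `0 → P → X × J → L → 0`. -/
lemma ses_prod {K P X J L : ModuleCat.{u} A} (h : SES A K P X) (h' : SES A K J L)
    [hJ : Module.Injective A J] : SES A P (ModuleCat.of A (X × J)) L := by
  obtain ⟨i, p, hi, hp, hip⟩ := h
  obtain ⟨j, q, hj, hq, hjq⟩ := h'
  obtain ⟨e, he⟩ := hJ.out i hi j
  have hpi : ∀ x, p (i x) = 0 := fun x => by
    rw [← LinearMap.mem_ker, ← hip]; exact ⟨x, rfl⟩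
  have hqj : ∀ x, q (j x) = 0 := fun x => by
    rw [← LinearMap.mem_ker, ← hjq]; exact ⟨x, rfl⟩
  obtain ⟨d, hd⟩ := exists_factor hp (h := q.comp e) (by
    rw [← hip]; rintro _ ⟨x, rfl⟩; simp [he, hqj])
  refine ⟨p.prod e, q.comp (LinearMap.snd A X J) - d.comp (LinearMap.fst A X J), ?_, ?_, ?_⟩
  · rw [injective_iff_map_eq_zero]
    intro x hx
    have h1 : x ∈ LinearMap.ker p := congrArg Prod.fst hx
    have h2 : e x = 0 := congrArg Prod.snd hx
    rw [← hip] at h1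
    obtain ⟨w, rfl⟩ := h1
    rw [he] at h2
    rw [hj (h2.trans (map_zero j).symm), map_zero]
  · intro z
    obtain ⟨b, rfl⟩ := hq z
    exact ⟨(0, b), by simp⟩
  · apply le_antisymm
    · rintro _ ⟨x, rfl⟩
      simp [hd]
    · rintro ⟨x, y⟩ hxy
      obtain ⟨x, rfl⟩ := hp x
      have h1 : q y - d (p x) = 0 := hxy
      rw [hd] at h1
      have h2 : y - e x ∈ LinearMap.ker q := by simpa using h1
      rw [← hjq] at h2
      obtain ⟨k, hk⟩ := h2
      refine ⟨x + i k, Prod.ext ?_ ?_⟩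
      · simp [hpi]
      · simp [he, hk]

lemma syzCat_succ {k : ℕ} {K P X : ModuleCat.{u} A} (hK : Module.Finite A K)
    (hP : Module.Finite A P) (hP' : Module.Projective A P) (h : SES A K P X)
    (hX : X ∈ SyzCat A k) : K ∈ SyzCat A (k + 1) := by
  obtain ⟨-, Ks, Ps, h0, hKs, hPs, hses⟩ := hX
  refine ⟨hK, Fin.cons K Ks, Fin.cons P Ps, rfl, ?_, ?_, ?_⟩
  · intro i
    induction i using Fin.cases with
    | zero => exact hK
    | succ i => exact hKs i
  · intro i
    induction i using Fin.cases with
    | zero => exact ⟨hP, hP'⟩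
    | succ i => exact hPs i
  · intro i
    induction i using Fin.cases with
    | zero =>
      rw [← h0] at h
      exact h
    | succ i => exact hses i

/-- The inductive step: if `[T]ₙ₊₁` contains `Ωᵏ⁺¹(A-mod)`, then some `[T']ₙ₊₂` contains
`Ωᵏ(A-mod)`. Here `T' = I × (I / T) × A` for a finitely generated injective `I ⊇ T`. -/
lemma syzCat_subset_bracket (R : Type u) [CommRing R] [IsArtinianRing R] [Algebra R A]
    [Module.Finite R A] {k n : ℕ} (T : ModuleCat.{u} A) [Module.Finite A T]
    (hT : SyzCat A (k + 1) ⊆ bracket A {T} (n + 1)) :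
    ∃ T' : ModuleCat.{u} A, Module.Finite A T' ∧ SyzCat A k ⊆ bracket A {T'} (n + 2) := by
  have : IsNoetherianRing A := isNoetherian_of_tower R inferInstance
  obtain ⟨I, j, hj, hIfin, hI⟩ := exists_finite_injective R T
  let C : ModuleCat.{u} A := ModuleCat.of A (I ⧸ LinearMap.range j)
  have hses : SES A T I C :=
    ⟨j, Submodule.mkQ _, hj, Submodule.mkQ_surjective _, (Submodule.ker_mkQ _).symm⟩
  have hCfin : Module.Finite A C := inferInstanceAs (Module.Finite A (I ⧸ LinearMap.range j))
  let B : ModuleCat.{u} A := ModuleCat.of A A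
  let T' : ModuleCat.{u} A :=
    ModuleCat.of A (I × (ModuleCat.of A (C × B) : ModuleCat.{u} A))
  have hT' : T' ∈ addClosure A {T'} := subset_addClosure _ rfl
  have hIT : I ∈ addClosure A {T'} := addClosure_summand (isSummand_fst _ _) hT'
  have hCBT := addClosure_summand (isSummand_snd I (ModuleCat.of A (C × B))) hT'
  have hCT : C ∈ addClosure A {T'} := addClosure_summand (isSummand_fst _ _) hCBT
  have hBT : B ∈ addClosure A {T'} := addClosure_summand (isSummand_snd _ _) hCBT
  refine ⟨T', inferInstanceAs (Module.Finite A (I × (C × A))), fun X hX => ?_⟩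
  have : Module.Finite A X := hX.1
  obtain ⟨l, p, hp⟩ := Module.Finite.exists_fin' A X
  let P : ModuleCat.{u} A := ModuleCat.of A (Fin l → A)
  let K : ModuleCat.{u} A := ModuleCat.of A (LinearMap.ker p)
  have hKPX : SES A K P X :=
    ⟨(LinearMap.ker p).subtype, p, Subtype.val_injective, hp, Submodule.range_subtype _⟩
  have hPT : P ∈ addClosure A {T'} := by
    have h1 : ({B} : Set (ModuleCat.{u} A)) ⊆ addClosure A {T'} := by
      rintro _ rfl; exact hBT
    exact addClosure_subset_addClosure h1 (addClosure_pi (fun _ : Fin l => B) fun _ => rfl)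
  have hK : K ∈ SyzCat A (k + 1) :=
    syzCat_succ (inferInstanceAs (Module.Finite A (LinearMap.ker p)))
      (inferInstanceAs (Module.Finite A (Fin l → A)))
      (inferInstanceAs (Module.Projective A (Fin l → A))) hKPX hX
  obtain ⟨J, L, hKJL, hJ, -, hL⟩ := bracket_subset_coSyz hses hIT hCT n (hT hK)
  have hXJ := bracket_ext (ses_prod hKPX hKJL) hPT hL
  rw [bracket_succ] at hXJ ⊢
  exact addClosure_summand (isSummand_fst X J) hXJ

lemma ed_syzCat_le_succ (R : Type u) [CommRing R] [IsArtinianRing R] [Algebra R A]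
    [Module.Finite R A] (k : ℕ) : ed A (SyzCat A k) ≤ ed A (SyzCat A (k + 1)) + 1 := by
  by_cases htop : ed A (SyzCat A (k + 1)) = ⊤
  · simp [htop]
  -- `sInf ∅ = ⊤`, so the infimum is attained.
  have hne : { n : ℕ∞ | ∃ m : ℕ, n = (m : ℕ∞) ∧ ∃ T : ModuleCat.{u} A, Module.Finite A T ∧
      SyzCat A (k + 1) ⊆ bracket A {T} (m + 1) }.Nonempty := by
    rw [Set.nonempty_iff_ne_empty]
    intro h
    exact htop (by rw [ed, h, sInf_empty])
  obtain ⟨n, hn, T, hTfin, hT⟩ := csInf_mem hne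
  obtain ⟨T', hT'fin, hT'⟩ := syzCat_subset_bracket R T hT
  have : ed A (SyzCat A (k + 1)) = n := hn
  rw [this]
  exact sInf_le ⟨n + 1, by push_cast; rfl, T', hT'fin, hT'⟩

lemma ed_syzCat_sub_le (R : Type u) [CommRing R] [IsArtinianRing R] [Algebra R A]
    [Module.Finite R A] (m i : ℕ) (him : i ≤ m) :
    ed A (SyzCat A (m - i)) ≤ ed A (SyzCat A m) + (i : ℕ∞) := by
  induction i with
  | zero => simp
  | succ i ih =>
    calc ed A (SyzCat A (m - (i + 1))) ≤ ed A (SyzCat A (m - (i + 1) + 1)) + 1 :=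
          ed_syzCat_le_succ R _
      _ = ed A (SyzCat A (m - i)) + 1 := by rw [show m - (i + 1) + 1 = m - i by omega]
      _ ≤ ed A (SyzCat A m) + (i : ℕ∞) + 1 := by gcongr; exact ih (by omega)
      _ = ed A (SyzCat A m) + ((i + 1 : ℕ) : ℕ∞) := by push_cast; rw [add_assoc]

end Shift

/-- Lemma 2.18: for an Artin algebra `A`, `m : ℕ` and `0 ≤ i ≤ m`,
`ed Ω^{m-i}(A-mod) ≤ ed Ωᵐ(A-mod) + i`; in particular
`ed (A-mod) ≤ ed Ωᵐ(A-mod) + m`. -/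
theorem stmt10 (R : Type u) [CommRing R] [IsArtinianRing R]
    [Algebra R A] [Module.Finite R A]
    (m i : ℕ) (him : i ≤ m) :
    ed A (SyzCat A (m - i)) ≤ ed A (SyzCat A m) + (i : ℕ∞) ∧
      ed A (SyzCat A 0) ≤ ed A (SyzCat A m) + (m : ℕ∞) := by
  refine ⟨ed_syzCat_sub_le R m i him, ?_⟩
  simpa using ed_syzCat_sub_le (A := A) R m m le_rfl

end Paper
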